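/- Suppose β ∈ (0,1) is such that for every injective map u : {1,…,N−1} → {0,…,N−1} and every v ∈ ℝ^N one has E(A_{u_{N−1}}^{−1}⋯A_{u_1}^{−1} v) ≤ ((N+2)β)^{2(N−1)} E(v). Then for every infinite word ω = ω_1ω_2… with letters in {0,…,N−1}, every n ≥ 1, and every v ∈ ℝ^N, E(A_{ω_n}^{−1} A_{ω_{n−1}}^{−1} ⋯ A_{ω_1}^{−1} v) ≤ ((N+2)^n β^{C_N(ω,n)})² E(v). -/

import Mathlib

open Matrix Filter

/-- The harmonic extension matrix `A_i` for `SG_N`. -/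
noncomputable def harmA (N : ℕ) (i : Fin N) : Matrix (Fin N) (Fin N) ℝ :=
  Matrix.of fun j k =>
    if j = i then (if k = i then 1 else 0)
    else if k = i then 2 / (N + 2)
    else (1 + if j = k then 1 else 0) / (N + 2)

/-- The energy bilinear form `E(u,v) = ∑_{k<l} (u_k - u_l)(v_k - v_l)` on `ℝ^N`. -/
noncomputable def energy (N : ℕ) (u v : Fin N → ℝ) : ℝ :=
  ∑ k : Fin N, ∑ l : Fin N, if k < l then (u k - u l) * (v k - v l) else 0

/-- Product `A_{w_m}⁻¹ ⋯ A_{w_1}⁻¹` of inverse harmonic extension matrices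
along a finite word `w = w_1 ⋯ w_m` (zero-indexed as `w 0, …, w (m-1)`). -/
noncomputable def wordProdInv (N : ℕ) {m : ℕ} (w : Fin m → Fin N) :
    Matrix (Fin N) (Fin N) ℝ :=
  ((List.ofFn fun j => (harmA N (w j))⁻¹).reverse).prod

/-- Product `A_{ω_n}⁻¹ ⋯ A_{ω_1}⁻¹` along the first `n` letters of the infinite
word `ω = ω_1 ω_2 ⋯` (zero-indexed, so `ω_1 = ω 0`). -/
noncomputable def prefixProdInv (N : ℕ) (ω : ℕ → Fin N) (n : ℕ) :
    Matrix (Fin N) (Fin N) ℝ :=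
  wordProdInv N fun j : Fin n => ω j

open scoped Classical in
/-- Block counting function `C_N(ω,n)`: the number of positions `i` with
`i + (N-2) ≤ n` (one-indexed) at which the `N-1` letters `ω_i, …, ω_{i+N-2}`
are pairwise distinct.  Here `ω` is zero-indexed, so `ω_1 = ω 0`. -/
noncomputable def blockCount (N : ℕ) (ω : ℕ → Fin N) (n : ℕ) : ℕ :=
  ((Finset.range n).filter fun i =>
    i + (N - 2) < n ∧ Function.Injective fun j : Fin (N - 1) => ω (i + j)).card

/-!
After rescaling by `(N + 2) ^ (2 * k)`, the energies `b k` of `A_{ω_k}⁻¹ ⋯ A_{ω_1}⁻¹ v` form an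
antitone sequence, because `(N + 2)² E(A_i w) = E(w) + (N + 1) (∑ₖ wₖ - N wᵢ)²`, and by
hypothesis every good block of length `L` starting at `k` gives `b (k + L) ≤ β ^ (2 * L) * b k`.
Good blocks may overlap, so these gains cannot simply be chained. Instead follow the product
`b k * ⋯ * b (k + L - 1)`: moving the window one step to the right trades `b k` for `b (k + L)`, so
each good position contributes its own factor `β ^ (2 * L)`. The window starting at `0` is at most
`b 0 ^ L` and the one ending at `n` is at least `b n ^ L`, so an `L`-th root gives the bound.
-/

section SlidingWindow

/-- The product of the `L` consecutive terms of `b` that start at index `m`: the quantity whose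
decay is followed as the window slides to the right. -/
def windowProd {M : Type*} [CommMonoid M] (b : ℕ → M) (L m : ℕ) : M :=
  ∏ r ∈ Finset.range L, b (m + r)

section Semiring

variable {R : Type*} [CommSemiring R] [LinearOrder R] [IsStrictOrderedRing R] {b : ℕ → R} {q : R}

theorem windowProd_nonneg (hb : ∀ k, 0 ≤ b k) (L m : ℕ) : 0 ≤ windowProd b L m :=
  Finset.prod_nonneg fun _ _ => hb _

theorem windowProd_le_pow (hb : ∀ k, 0 ≤ b k) (hanti : Antitone b) (L m : ℕ) :
    windowProd b L m ≤ b m ^ L :=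
  calc
    windowProd b L m ≤ ∏ _r ∈ Finset.range L, b m :=
      Finset.prod_le_prod (fun _ _ => hb _) fun _ _ => hanti (Nat.le_add_right _ _)
    _ = b m ^ L := by rw [Finset.prod_const, Finset.card_range]

theorem pow_le_windowProd (hb : ∀ k, 0 ≤ b k) (hanti : Antitone b) {L m n : ℕ}
    (hn : m + L ≤ n + 1) : b n ^ L ≤ windowProd b L m :=
  calc
    b n ^ L = ∏ _r ∈ Finset.range L, b n := by rw [Finset.prod_const, Finset.card_range]
    _ ≤ windowProd b L m := by
      refine Finset.prod_le_prod (fun _ _ => hb _) fun r hr => hanti ?_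
      have := Finset.mem_range.1 hr
      omega

theorem windowProd_succ_le_self (hb : ∀ k, 0 ≤ b k) (hanti : Antitone b) (L m : ℕ) :
    windowProd b L (m + 1) ≤ windowProd b L m :=
  Finset.prod_le_prod (fun _ _ => hb _) fun _ _ => hanti (by omega)

theorem windowProd_succ_le_mul (hb : ∀ k, 0 ≤ b k) {L m : ℕ} (hL : L ≠ 0)
    (hm : b (m + L) ≤ q * b m) : windowProd b L (m + 1) ≤ q * windowProd b L m := by
  obtain ⟨l, rfl⟩ := Nat.exists_eq_succ_of_ne_zero hL
  have first : windowProd b (l + 1) m = windowProd b l (m + 1) * b m := by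
    simp only [windowProd, Finset.prod_range_succ', add_zero, add_assoc, add_comm 1]
  have last : windowProd b (l + 1) (m + 1) = windowProd b l (m + 1) * b (m + (l + 1)) := by
    simp only [windowProd, Finset.prod_range_succ, add_assoc, add_comm 1]
  calc
    windowProd b (l + 1) (m + 1) = windowProd b l (m + 1) * b (m + (l + 1)) := last
    _ ≤ windowProd b l (m + 1) * (q * b m) :=
      mul_le_mul_of_nonneg_left hm (windowProd_nonneg hb _ _)
    _ = q * windowProd b (l + 1) m := by rw [first, mul_left_comm]

theorem le_pow_count_mul (p : ℕ → Prop) [DecidablePred p] (hq : 0 ≤ q)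
    (hstep : ∀ k, b (k + 1) ≤ b k) (hgain : ∀ k, p k → b (k + 1) ≤ q * b k) (m : ℕ) :
    b m ≤ q ^ Nat.count p m * b 0 := by
  induction m with
  | zero => simp
  | succ m ih =>
    by_cases hm : p m
    · calc
        b (m + 1) ≤ q * b m := hgain m hm
        _ ≤ q * (q ^ Nat.count p m * b 0) := mul_le_mul_of_nonneg_left ih hq
        _ = q ^ Nat.count p (m + 1) * b 0 := by
          rw [Nat.count_succ, if_pos hm, pow_succ', mul_assoc]
    · rw [Nat.count_succ, if_neg hm, add_zero]
      exact (hstep m).trans ih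

theorem antitone_le_pow_count_mul (hb : ∀ k, 0 ≤ b k) (hanti : Antitone b) (p : ℕ → Prop)
    [DecidablePred p] (hq : 0 ≤ q) {L : ℕ} (hL : L ≠ 0)
    (hgain : ∀ k, p k → b (k + L) ≤ q ^ L * b k) (n : ℕ) :
    b n ≤ q ^ Nat.count p (n + 1 - L) * b 0 := by
  rcases Nat.lt_or_ge (n + 1) L with hn | hn
  · simpa [Nat.sub_eq_zero_of_le hn.le] using hanti (Nat.zero_le n)
  refine (pow_le_pow_iff_left₀ (hb n) (mul_nonneg (pow_nonneg hq _) (hb 0)) hL).1 ?_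
  calc
    b n ^ L ≤ windowProd b L (n + 1 - L) := pow_le_windowProd hb hanti (by omega)
    _ ≤ (q ^ L) ^ Nat.count p (n + 1 - L) * windowProd b L 0 :=
      le_pow_count_mul p (pow_nonneg hq L) (windowProd_succ_le_self hb hanti L)
        (fun k hk => windowProd_succ_le_mul hb hL (hgain k hk)) _
    _ ≤ (q ^ L) ^ Nat.count p (n + 1 - L) * b 0 ^ L :=
      mul_le_mul_of_nonneg_left (windowProd_le_pow hb hanti L 0)
        (pow_nonneg (pow_nonneg hq _) _)
    _ = (q ^ Nat.count p (n + 1 - L) * b 0) ^ L := by rw [mul_pow, pow_right_comm]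

end Semiring

theorem le_pow_mul_pow_count_mul {R : Type*} [Field R] [LinearOrder R] [IsStrictOrderedRing R]
    {a : ℕ → R} {c q : R} (ha : ∀ k, 0 ≤ a k) (hc : 0 < c) (hq : 0 ≤ q)
    (hstep : ∀ k, a (k + 1) ≤ c * a k) (p : ℕ → Prop) [DecidablePred p] {L : ℕ} (hL : L ≠ 0)
    (hgain : ∀ k, p k → a (k + L) ≤ (c * q) ^ L * a k) (n : ℕ) :
    a n ≤ c ^ n * q ^ Nat.count p (n + 1 - L) * a 0 := by
  have hanti : Antitone fun k => a k / c ^ k := antitone_nat_of_succ_le fun k => by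
    rw [div_le_div_iff₀ (pow_pos hc _) (pow_pos hc _)]
    calc
      a (k + 1) * c ^ k ≤ c * a k * c ^ k :=
        mul_le_mul_of_nonneg_right (hstep k) (pow_pos hc k).le
      _ = a k * c ^ (k + 1) := by ring
  have hscaled : ∀ k, p k → a (k + L) / c ^ (k + L) ≤ q ^ L * (a k / c ^ k) := fun k hk => by
    rw [div_le_iff₀ (pow_pos hc _)]
    calc
      a (k + L) ≤ (c * q) ^ L * a k := hgain k hk
      _ = q ^ L * (a k / c ^ k) * c ^ (k + L) := by
        field_simp
        ring
  have hbound : a n / c ^ n ≤ q ^ Nat.count p (n + 1 - L) * (a 0 / c ^ 0) :=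
    antitone_le_pow_count_mul (fun k => div_nonneg (ha k) (pow_pos hc k).le) hanti p hq hL
      hscaled n
  rw [div_le_iff₀ (pow_pos hc n), pow_zero, div_one] at hbound
  linarith

end SlidingWindow

section Energy

variable {N : ℕ}

theorem energy_self_nonneg (v : Fin N → ℝ) : 0 ≤ energy N v v := by
  refine Finset.sum_nonneg fun k _ => Finset.sum_nonneg fun l _ => ?_
  split_ifs
  exacts [mul_self_nonneg _, le_rfl]

theorem sum_sum_sub_mul_sub_eq_two_mul_energy (u v : Fin N → ℝ) :
    ∑ k, ∑ l, (u k - u l) * (v k - v l) = 2 * energy N u v := by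
  have energy_swap :
      energy N u v = ∑ k, ∑ l, if l < k then (u k - u l) * (v k - v l) else 0 := by
    rw [energy, Finset.sum_comm]
    refine Finset.sum_congr rfl fun k _ => Finset.sum_congr rfl fun l _ => ?_
    congr 1
    ring
  rw [two_mul]
  nth_rewrite 2 [energy_swap]
  simp only [energy, ← Finset.sum_add_distrib]
  refine Finset.sum_congr rfl fun k _ => Finset.sum_congr rfl fun l _ => ?_
  rcases lt_trichotomy k l with h | rfl | h
  · simp [h, h.asymm]
  · simp
  · simp [h, h.asymm]

theorem energy_eq_mul_dotProduct_sub (u v : Fin N → ℝ) :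
    energy N u v = N * (u ⬝ᵥ v) - (∑ k, u k) * ∑ k, v k := by
  have expand : ∑ k, ∑ l, (u k - u l) * (v k - v l) =
      2 * (N * (u ⬝ᵥ v) - (∑ k, u k) * ∑ k, v k) := by
    simp only [sub_mul, mul_sub, Finset.sum_sub_distrib, ← Finset.mul_sum, ← Finset.sum_mul,
      Finset.sum_const, Finset.card_univ, Fintype.card_fin, nsmul_eq_mul, dotProduct,
      mul_left_comm _ (N : ℝ)]
    ring
  linarith [sum_sum_sub_mul_sub_eq_two_mul_energy u v]

theorem energy_smul_self (c : ℝ) (v : Fin N → ℝ) :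
    energy N (c • v) (c • v) = c ^ 2 * energy N v v := by
  simp only [energy_eq_mul_dotProduct_sub, smul_dotProduct, dotProduct_smul, Pi.smul_apply,
    smul_eq_mul, ← Finset.mul_sum]
  ring

theorem energy_add_const (u v : Fin N → ℝ) (c d : ℝ) :
    energy N (u + Function.const _ c) (v + Function.const _ d) = energy N u v := by
  simp [energy]

theorem energy_sub_smul_single_self (v : Fin N → ℝ) (i : Fin N) (x : ℝ) :
    energy N (v - x • Pi.single i 1) (v - x • Pi.single i 1) =
      energy N v v + 2 * x * (∑ k, v k - N * v i) + (N - 1) * x ^ 2 := by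
  simp only [energy_eq_mul_dotProduct_sub, sub_dotProduct, dotProduct_sub, smul_dotProduct,
    dotProduct_smul, single_one_dotProduct, dotProduct_single_one, Pi.sub_apply, Pi.smul_apply,
    Pi.single_eq_same, smul_eq_mul, Finset.sum_sub_distrib, ← Finset.mul_sum,
    Finset.sum_pi_single', Finset.mem_univ, if_true]
  ring

end Energy

section HarmonicExtension

variable {N : ℕ}

theorem harmA_mulVec_apply_self (i : Fin N) (w : Fin N → ℝ) : (harmA N i *ᵥ w) i = w i := by
  simp [harmA, mulVec, dotProduct]

theorem mul_harmA_mulVec_apply_of_ne {i j : Fin N} (hj : j ≠ i) (w : Fin N → ℝ) :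
    ((N : ℝ) + 2) * (harmA N i *ᵥ w) j = ∑ k, w k + w i + w j := by
  have hN : (N : ℝ) + 2 ≠ 0 := by positivity
  have entry (k : Fin N) : ((N : ℝ) + 2) * (harmA N i j k * w k) =
      w k + (if k = i then w k else 0) + if j = k then w k else 0 := by
    rcases eq_or_ne k i with rfl | hk
    · simp only [harmA, of_apply, hj, if_true, if_false]
      field_simp
      ring
    · simp only [harmA, of_apply, hj, hk, if_false]
      split_ifs <;> field_simp <;> ring
  simp only [mulVec, dotProduct, Finset.mul_sum, entry, Finset.sum_add_distrib,
    Finset.sum_ite_eq, Finset.sum_ite_eq', Finset.mem_univ, if_true]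

-- Constants carry no energy, so `(N + 2) A_i` only perturbs `w` along the `i`-th basis vector.
theorem smul_harmA_mulVec (i : Fin N) (w : Fin N → ℝ) :
    ((N : ℝ) + 2) • (harmA N i *ᵥ w) =
      w - (∑ k, w k - N * w i) • Pi.single i 1 + Function.const _ (∑ k, w k + w i) := by
  ext j
  simp only [Pi.add_apply, Pi.sub_apply, Pi.smul_apply, smul_eq_mul, Function.const_apply]
  rcases eq_or_ne j i with rfl | hj
  · rw [harmA_mulVec_apply_self, Pi.single_eq_same]
    ring
  · rw [mul_harmA_mulVec_apply_of_ne hj, Pi.single_eq_of_ne hj]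
    ring

theorem energy_harmA_mulVec (i : Fin N) (w : Fin N → ℝ) :
    ((N : ℝ) + 2) ^ 2 * energy N (harmA N i *ᵥ w) (harmA N i *ᵥ w) =
      energy N w w + (N + 1) * (∑ k, w k - N * w i) ^ 2 := by
  rw [← energy_smul_self, smul_harmA_mulVec, energy_add_const, energy_sub_smul_single_self]
  ring

theorem isUnit_harmA (i : Fin N) : IsUnit (harmA N i) := by
  rw [← mulVec_injective_iff_isUnit, ← coe_mulVecLin, injective_iff_map_eq_zero]
  intro w hw
  rw [mulVecLin_apply] at hw
  have hwi : w i = 0 := by rw [← harmA_mulVec_apply_self i w, hw, Pi.zero_apply]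
  have hsum : ∑ k, w k = 0 := by
    have henergy := energy_harmA_mulVec i w
    have energy_zero : energy N 0 0 = 0 := by simp [energy]
    rw [hw, energy_zero, mul_zero, hwi, mul_zero, sub_zero] at henergy
    have hsq : ((N : ℝ) + 1) * (∑ k, w k) ^ 2 = 0 :=
      le_antisymm (by linarith [energy_self_nonneg w]) (by positivity)
    exact pow_eq_zero_iff two_ne_zero |>.1 ((mul_eq_zero.1 hsq).resolve_left (by positivity))
  ext j
  rcases eq_or_ne j i with rfl | hj
  · exact hwi
  · simpa [hw, hsum, hwi, eq_comm] using mul_harmA_mulVec_apply_of_ne hj w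

theorem energy_inv_harmA_mulVec_le (i : Fin N) (v : Fin N → ℝ) :
    energy N ((harmA N i)⁻¹ *ᵥ v) ((harmA N i)⁻¹ *ᵥ v) ≤ ((N : ℝ) + 2) ^ 2 * energy N v v := by
  have hdet : IsUnit (harmA N i).det := (isUnit_iff_isUnit_det _).1 (isUnit_harmA i)
  have henergy := energy_harmA_mulVec i ((harmA N i)⁻¹ *ᵥ v)
  rw [mulVec_mulVec, mul_nonsing_inv _ hdet, one_mulVec] at henergy
  rw [henergy]
  exact le_add_of_nonneg_right (by positivity)

end HarmonicExtension

section Words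

variable {N : ℕ}

theorem prefixProdInv_zero (ω : ℕ → Fin N) : prefixProdInv N ω 0 = 1 := rfl

theorem prefixProdInv_add (ω : ℕ → Fin N) (k m : ℕ) :
    prefixProdInv N ω (k + m) =
      wordProdInv N (fun j : Fin m => ω (k + j)) * prefixProdInv N ω k := by
  unfold prefixProdInv wordProdInv
  rw [List.ofFn_add, List.reverse_append, List.prod_append]
  rfl

theorem prefixProdInv_succ (ω : ℕ → Fin N) (k : ℕ) :
    prefixProdInv N ω (k + 1) = (harmA N (ω k))⁻¹ * prefixProdInv N ω k := by
  simp [prefixProdInv_add, wordProdInv]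

open scoped Classical in
/-- The number of occurrences, within the first `n` letters of `ω`, of words of length `L` that
belong to `G`; occurrences may overlap. An occurrence starting at `i` fits when `i + L ≤ n`, that
is, when `i < n + 1 - L`. -/
noncomputable def occurrenceCount {α : Type*} {L : ℕ} (G : Set (Fin L → α)) (ω : ℕ → α) (n : ℕ) :
    ℕ :=
  Nat.count (fun i => (fun j : Fin L => ω (i + j)) ∈ G) (n + 1 - L)

theorem blockCount_eq_occurrenceCount (hN : 2 ≤ N) (ω : ℕ → Fin N) (n : ℕ) :
    blockCount N ω n =
      occurrenceCount {u : Fin (N - 1) → Fin N | Function.Injective u} ω n := by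
  rw [blockCount, occurrenceCount, Nat.count_eq_card_filter_range]
  congr 1
  ext i
  simp only [Finset.mem_filter, Finset.mem_range, ← and_assoc, Set.mem_ofPred_eq]
  exact and_congr_left fun _ => by omega

end Words

theorem prefix_energy_bound_via_blockCount_general {N L : ℕ} (hL : L ≠ 0) (β : ℝ)
    (G : Set (Fin L → Fin N))
    (hblock : ∀ u ∈ G, ∀ v : Fin N → ℝ,
      energy N (wordProdInv N u *ᵥ v) (wordProdInv N u *ᵥ v) ≤
        (((N : ℝ) + 2) * β) ^ (2 * L) * energy N v v)
    (ω : ℕ → Fin N) (n : ℕ) (v : Fin N → ℝ) :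
    energy N (prefixProdInv N ω n *ᵥ v) (prefixProdInv N ω n *ᵥ v) ≤
      (((N : ℝ) + 2) ^ n * β ^ occurrenceCount G ω n) ^ 2 * energy N v v := by
  classical
  set a : ℕ → ℝ := fun k => energy N (prefixProdInv N ω k *ᵥ v) (prefixProdInv N ω k *ᵥ v)
  have hstep (k : ℕ) : a (k + 1) ≤ ((N : ℝ) + 2) ^ 2 * a k := by
    simp only [a, prefixProdInv_succ, ← mulVec_mulVec]
    exact energy_inv_harmA_mulVec_le _ _
  have hgain (k : ℕ) (hk : (fun j : Fin L => ω (k + j)) ∈ G) :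
      a (k + L) ≤ (((N : ℝ) + 2) ^ 2 * β ^ 2) ^ L * a k := by
    simp only [a, prefixProdInv_add, ← mulVec_mulVec, ← mul_pow, ← pow_mul]
    exact hblock _ hk _
  have hbound : a n ≤ (((N : ℝ) + 2) ^ 2) ^ n * (β ^ 2) ^ occurrenceCount G ω n * a 0 :=
    le_pow_mul_pow_count_mul (a := a) (fun _ => energy_self_nonneg _) (by positivity)
      (sq_nonneg β) hstep (fun i => (fun j : Fin L => ω (i + j)) ∈ G) hL hgain n
  calc
    a n ≤ (((N : ℝ) + 2) ^ 2) ^ n * (β ^ 2) ^ occurrenceCount G ω n * a 0 := hbound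
    _ = (((N : ℝ) + 2) ^ n * β ^ occurrenceCount G ω n) ^ 2 * energy N v v := by
      simp only [a, prefixProdInv_zero, one_mulVec, mul_pow, pow_right_comm _ 2]

theorem prefix_energy_bound_via_blockCount (N : ℕ) (hN : 3 ≤ N) (β : ℝ)
    (hβ0 : 0 < β) (hβ1 : β < 1)
    (hblock : ∀ u : Fin (N - 1) → Fin N, Function.Injective u →
      ∀ v : Fin N → ℝ,
        energy N ((wordProdInv N u).mulVec v) ((wordProdInv N u).mulVec v) ≤
          (((N : ℝ) + 2) * β) ^ (2 * (N - 1)) * energy N v v)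
    (ω : ℕ → Fin N) (n : ℕ) (hn : 1 ≤ n) (v : Fin N → ℝ) :
    energy N ((prefixProdInv N ω n).mulVec v) ((prefixProdInv N ω n).mulVec v) ≤
      (((N : ℝ) + 2) ^ n * β ^ blockCount N ω n) ^ 2 * energy N v v := by
  rw [blockCount_eq_occurrenceCount (by omega)]
  exact prefix_energy_bound_via_blockCount_general (by omega) β {u | Function.Injective u}
    hblock ω n v
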